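/- (Chernoff bound) For each n let ν_n, ω_n be positive definite matrices on a finite dimensional Hilbert space H_n and w_n > 0 weights with w_n → ∞. Assume that e(s) = lim_n (1/w_n) log Tr(ν_n^s ω_n^{1−s}) exists and is finite for s ∈ [0,1], is continuous on [0,1], differentiable on (0,1), and D⁺e(0) < D⁻e(1). Then lim_n (1/w_n) log D(ν_n, ω_n) exists and equals inf_{s∈[0,1]} e(s), where D(ν_n,ω_n) = (1/2)(Tr ω_n + Tr ν_n − Tr|ω_n − ν_n|). -/

import Mathlib

open scoped ComplexOrder
open Filter

/-- Functional calculus for Hermitian matrices (junk value `0` off the Hermitian matrices). -/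
noncomputable def cfcM {d : ℕ} (f : ℝ → ℝ) (A : Matrix (Fin d) (Fin d) ℂ) :
    Matrix (Fin d) (Fin d) ℂ :=
  if h : A.IsHermitian then
    (h.eigenvectorUnitary : Matrix (Fin d) (Fin d) ℂ) *
      Matrix.diagonal (fun i => (f (h.eigenvalues i) : ℂ)) *
      (star (h.eigenvectorUnitary : Matrix (Fin d) (Fin d) ℂ))
  else 0

/-- Real power of a (positive) Hermitian matrix via functional calculus. -/
noncomputable def mpow {d : ℕ} (A : Matrix (Fin d) (Fin d) ℂ) (s : ℝ) :
    Matrix (Fin d) (Fin d) ℂ := cfcM (fun x => x ^ s) A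

/-- Absolute value of a Hermitian matrix via functional calculus. -/
noncomputable def matAbs {d : ℕ} (A : Matrix (Fin d) (Fin d) ℂ) :
    Matrix (Fin d) (Fin d) ℂ := cfcM (fun x => |x|) A

/-- Minimal error probability `D(ν,ω) = (1/2)(Tr ω + Tr ν − Tr|ω−ν|)`. -/
noncomputable def minErr {d : ℕ} (ν ω : Matrix (Fin d) (Fin d) ℂ) : ℝ :=
  (1 / 2 : ℝ) * ((ω.trace).re + (ν.trace).re - ((matAbs (ω - ν)).trace).re)

section MatrixPart

open Matrix MatrixOrder Matrix.Norms.L2Operator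

lemma cfcM_eq {d : ℕ} (f : ℝ → ℝ) {A : Matrix (Fin d) (Fin d) ℂ} (hA : A.IsHermitian) :
    cfcM f A = cfc f A := by
  rw [hA.cfc_eq, cfcM, dif_pos hA, Matrix.IsHermitian.cfc, Unitary.conjStarAlgAut_apply]
  rfl

lemma mpow_eq {d : ℕ} (s : ℝ) {A : Matrix (Fin d) (Fin d) ℂ} (hA : A.PosSemidef) :
    mpow A s = A ^ s := by
  rw [mpow, cfcM_eq _ hA.1, CFC.rpow_eq_cfc_real (by exact hA.nonneg)]

lemma mpow_mono {d : ℕ} {s : ℝ} (hs : s ∈ Set.Icc (0:ℝ) 1) {A B : Matrix (Fin d) (Fin d) ℂ}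
    (hA : A.PosSemidef) (hAB : (B - A).PosSemidef) : (mpow B s - mpow A s).PosSemidef := by
  have hB : B.PosSemidef := by simpa using hA.add hAB
  rw [mpow_eq s hA, mpow_eq s hB]
  exact CFC.rpow_le_rpow hs (show A ≤ B from hAB)

lemma mpow_psd {d : ℕ} {s : ℝ} {A : Matrix (Fin d) (Fin d) ℂ}
    (hA : A.PosSemidef) : (mpow A s).PosSemidef := by
  rw [mpow_eq s hA]
  have : (0:Matrix (Fin d) (Fin d) ℂ) ≤ A ^ s := CFC.rpow_nonneg
  exact Matrix.nonneg_iff_posSemidef.1 this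

lemma mpow_mul {d : ℕ} {s t: ℝ} (hst : s + t = 1) {A : Matrix (Fin d) (Fin d) ℂ}
    (hA : A.PosDef) : mpow A s * mpow A t = A := by
  rw [mpow_eq s hA.posSemidef, mpow_eq t hA.posSemidef, ← CFC.rpow_add hA.isUnit, hst,
    CFC.rpow_one A hA.posSemidef.nonneg]

lemma trace_mul_psd {d : ℕ} {A B : Matrix (Fin d) (Fin d) ℂ}
    (hA : A.PosSemidef) (hB : B.PosSemidef) : 0 ≤ ((A * B).trace).re := by
  obtain ⟨C, rfl⟩ := CStarAlgebra.nonneg_iff_eq_star_mul_self.1 hB.nonneg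
  have := (hA.mul_mul_conjTranspose_same C).trace_nonneg
  rw [← mul_assoc, Matrix.trace_mul_comm, ← mul_assoc]
  exact (Complex.le_def.1 this).1

lemma cfcM_mul {d : ℕ} (f g : ℝ → ℝ) {A : Matrix (Fin d) (Fin d) ℂ} (hA : A.IsHermitian) :
    cfcM f A * cfcM g A = cfcM (fun x => f x * g x) A := by
  have hc : ∀ f : ℝ → ℝ, ContinuousOn f (spectrum ℝ A) := fun f =>
    (Matrix.finite_real_spectrum (A := A)).continuousOn f
  rw [cfcM_eq _ hA, cfcM_eq _ hA, cfcM_eq _ hA, cfc_mul f g A (hc _) (hc _)]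

lemma cfcM_add {d : ℕ} (f g : ℝ → ℝ) {A : Matrix (Fin d) (Fin d) ℂ} (hA : A.IsHermitian) :
    cfcM f A + cfcM g A = cfcM (fun x => f x + g x) A := by
  have hc : ∀ f : ℝ → ℝ, ContinuousOn f (spectrum ℝ A) := fun f =>
    (Matrix.finite_real_spectrum (A := A)).continuousOn f
  rw [cfcM_eq _ hA, cfcM_eq _ hA, cfcM_eq _ hA, cfc_add A f g (hc _) (hc _)]

lemma cfcM_id {d : ℕ} {A : Matrix (Fin d) (Fin d) ℂ} (hA : A.IsHermitian) :
    cfcM (fun x => x) A = A := by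
  rw [cfcM_eq _ hA]
  exact cfc_id' ℝ A hA

lemma cfcM_herm {d : ℕ} (f : ℝ → ℝ) {A : Matrix (Fin d) (Fin d) ℂ} (hA : A.IsHermitian) :
    (cfcM f A).IsHermitian := by
  rw [cfcM_eq _ hA]; exact cfc_predicate f A

lemma cfcM_psd {d : ℕ} (f : ℝ → ℝ) (hf : ∀ x, 0 ≤ f x) {A : Matrix (Fin d) (Fin d) ℂ}
    (hA : A.IsHermitian) : (cfcM f A).PosSemidef := by
  rw [cfcM_eq _ hA]
  exact Matrix.nonneg_iff_posSemidef.1 (cfc_nonneg (fun x _ => hf x))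

/-- minErr in terms of the positive part. -/
lemma minErr_eq {d : ℕ} (ν ω : Matrix (Fin d) (Fin d) ℂ) (h : (ω - ν).IsHermitian) :
    minErr ν ω = (ω.trace).re - ((cfcM (fun x => max x 0) (ω - ν)).trace).re := by
  have h1 : matAbs (ω - ν) + (ω - ν) = cfcM (fun x => max x 0) (ω - ν)
      + cfcM (fun x => max x 0) (ω - ν) := by
    nth_rw 2 [← cfcM_id h]
    rw [matAbs, cfcM_add _ _ h, cfcM_add _ _ h]
    congr 1
    funext x
    rcases le_total x 0 with hx | hx
    · simp [hx, abs_of_nonpos]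
    · simp [hx, abs_of_nonneg]
  have h2 := congrArg (fun M => (Matrix.trace M).re) h1
  simp only [Matrix.trace_add, Matrix.trace_sub, Complex.add_re, Complex.sub_re] at h2
  rw [minErr]
  linarith

lemma minErr_le {d : ℕ} {ν ω : Matrix (Fin d) (Fin d) ℂ} (hν : ν.PosDef) (hω : ω.PosDef)
    {s : ℝ} (hs : s ∈ Set.Icc (0:ℝ) 1) :
    minErr ν ω ≤ ((mpow ν s * mpow ω (1 - s)).trace).re := by
  have h : (ω - ν).IsHermitian := hω.1.sub hν.1
  rw [minErr_eq _ _ h]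
  set Δ := cfcM (fun x => max x 0) (ω - ν) with hΔ
  have hΔ0 : Δ.PosSemidef := cfcM_psd _ (fun x => le_max_right _ _) h
  have hΔ1 : (Δ - (ω - ν)).PosSemidef := by
    have h1 : Δ = cfcM (fun x => max (-x) 0) (ω - ν) + (ω - ν) := by
      nth_rw 2 [← cfcM_id h]
      rw [hΔ, cfcM_add _ _ h]
      congr 1
      funext x
      rcases le_total x 0 with hx | hx
      · simp [hx]
      · simp [hx]
    rw [h1, add_sub_cancel_right]
    exact cfcM_psd _ (fun x => le_max_right _ _) h
  have hC : (ν + Δ).PosDef := hν.add_posSemidef hΔ0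
  have ht : 1 - s ∈ Set.Icc (0:ℝ) 1 := ⟨by linarith [hs.2], by linarith [hs.1]⟩
  have hωC : (ν + Δ - ω).PosSemidef := by
    convert hΔ1 using 1; abel
  have hνC : (ν + Δ - ν).PosSemidef := by simpa using hΔ0
  have a1 := trace_mul_psd (mpow_mono hs hω.posSemidef hωC) (mpow_psd (s := 1 - s) hω.posSemidef)
  have a2 := trace_mul_psd (mpow_mono hs hν.posSemidef hνC) (mpow_mono ht hω.posSemidef hωC)
  have a3 := trace_mul_psd (mpow_psd (s := s) hν.posSemidef) (mpow_mono ht hν.posSemidef hνC)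
  have hs1 : s + (1 - s) = 1 := by ring
  simp only [sub_mul, mul_sub, mpow_mul hs1 hν, mpow_mul hs1 hω, mpow_mul hs1 hC,
    Matrix.trace_sub, Matrix.trace_add, Complex.sub_re, Complex.add_re] at a1 a2 a3
  linarith

lemma exists_classical {d : ℕ} {ν ω : Matrix (Fin d) (Fin d) ℂ} (hν : ν.PosDef) (hω : ω.PosDef) :
    ∃ (q : Fin d × Fin d → ℝ) (l m : Fin d × Fin d → ℝ), (∀ x, 0 ≤ q x) ∧ (∀ x, 0 < l x) ∧
      (∀ x, 0 < m x) ∧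
      (∀ s, ((mpow ν s * mpow ω (1 - s)).trace).re = ∑ x, q x * (l x ^ s * m x ^ (1 - s))) ∧
      (1 / 2) * ∑ x, q x * min (l x) (m x) ≤ minErr ν ω := by
  have key : ∀ (U V : Matrix (Fin d) (Fin d) ℂ) (a b : Fin d → ℝ) (P : Matrix (Fin d) (Fin d) ℂ),
      ((U * diagonal (fun i => (a i : ℂ)) * star U * (P * (V * diagonal (fun i => (b i : ℂ)) * star V) * star P)).trace).re
      = ∑ x : Fin d × Fin d, Complex.normSq ((star U * P * V) x.1 x.2) * (a x.1 * b x.2) := by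
    intro U V a b P
    have e1 : (U * diagonal (fun i => (a i : ℂ)) * star U * (P * (V * diagonal (fun i => (b i : ℂ)) * star V) * star P)).trace
      = (diagonal (fun i => (a i : ℂ)) * (star U * P * V) * (diagonal (fun i => (b i : ℂ)) * star (star U * P * V))).trace := by
      rw [mul_assoc U, mul_assoc U, Matrix.trace_mul_comm U]
      simp only [star_mul, star_star, mul_assoc]
    rw [e1]
    generalize star U * P * V = W
    rw [Matrix.trace, Fintype.sum_prod_type, Complex.re_sum]
    refine Finset.sum_congr rfl fun i _ => ?_
    rw [Matrix.diag_apply, Matrix.mul_apply, Complex.re_sum]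
    refine Finset.sum_congr rfl fun j _ => ?_
    rw [Matrix.diagonal_mul, Matrix.diagonal_mul, Matrix.star_apply, Complex.normSq_apply]
    simp
    ring
  set U := (hν.1.eigenvectorUnitary : Matrix (Fin d) (Fin d) ℂ) with hU
  set V := (hω.1.eigenvectorUnitary : Matrix (Fin d) (Fin d) ℂ) with hV
  have hUU : U * star U = 1 := Unitary.coe_mul_star_self _
  have hVV : V * star V = 1 := Unitary.coe_mul_star_self _
  have cν : ∀ f, cfcM f ν = U * diagonal (fun i => (f (hν.1.eigenvalues i) : ℂ)) * star U := by
    intro f; rw [cfcM, dif_pos hν.1]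
  have cω : ∀ f, cfcM f ω = V * diagonal (fun i => (f (hω.1.eigenvalues i) : ℂ)) * star V := by
    intro f; rw [cfcM, dif_pos hω.1]
  refine ⟨fun x => Complex.normSq ((star U * V) x.1 x.2), fun x => hν.1.eigenvalues x.1,
    fun x => hω.1.eigenvalues x.2, fun x => Complex.normSq_nonneg _,
    fun x => hν.eigenvalues_pos _, fun x => hω.eigenvalues_pos _, ?_, ?_⟩
  · intro s
    have := key U V (fun i => hν.1.eigenvalues i ^ s) (fun i => hω.1.eigenvalues i ^ (1 - s)) 1
    rw [mul_one, one_mul, star_one, mul_one] at this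
    rw [mpow, mpow, cν, cω]
    exact this
  · have h : (ω - ν).IsHermitian := hω.1.sub hν.1
    set P := cfcM (fun x => if 0 < x then 1 else 0) (ω - ν) with hP
    have hPh : star P = P := cfcM_herm _ h
    have hPP : P * P = P := by
      rw [hP, cfcM_mul _ _ h]; congr 1; funext x; split_ifs <;> simp
    have hPΔ : (ω - ν) * P = cfcM (fun x => max x 0) (ω - ν) := by
      nth_rw 1 [← cfcM_id h]
      rw [hP, cfcM_mul _ _ h]; congr 1; funext x
      split_ifs with hx
      · simp [hx.le]
      · simp [not_lt.1 hx]
    have hQh : star (1 - P) = 1 - P := by rw [star_sub, hPh, star_one]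
    have hQQ : (1 - P) * (1 - P) = 1 - P := by
      rw [sub_mul, mul_sub, mul_sub, hPP]; simp
    -- two identities
    have i1 := key U V (fun _ => 1) (fun j => hω.1.eigenvalues j) (1 - P)
    have i2 := key U V (fun j => hν.1.eigenvalues j) (fun _ => 1) P
    have d1 : diagonal (fun _ : Fin d => ((1:ℝ):ℂ)) = 1 := by simp
    have c1 := cω (fun x => x)
    have c2 := cν (fun x => x)
    rw [cfcM_id hω.1] at c1
    rw [cfcM_id hν.1] at c2
    rw [d1, mul_one, hUU, one_mul, ← c1, hQh, Matrix.trace_mul_comm, ← mul_assoc, hQQ] at i1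
    rw [d1, mul_one, hVV, mul_one, ← c2, hPh, hPP] at i2
    have hm : minErr ν ω = (((1 - P) * ω).trace).re + ((ν * P).trace).re := by
      rw [minErr_eq _ _ h, ← hPΔ, Matrix.trace_mul_comm (1 - P) ω]
      simp only [sub_mul, mul_sub, mul_one, Matrix.trace_sub, Complex.sub_re]
      ring
    rw [hm, i1, i2, ← Finset.sum_add_distrib, Finset.mul_sum]
    refine Finset.sum_le_sum fun x _ => ?_
    have hx : (star U * V) x.1 x.2 = (star U * (1 - P) * V) x.1 x.2 + (star U * P * V) x.1 x.2 := by
      rw [← Matrix.add_apply, ← add_mul, ← mul_add, sub_add_cancel, mul_one]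
    simp only [hx, one_mul, mul_one]
    generalize (star U * (1 - P) * V) x.1 x.2 = z1
    generalize (star U * P * V) x.1 x.2 = z2
    have hl : 0 < hν.1.eigenvalues x.1 := hν.eigenvalues_pos _
    have hmm : 0 < hω.1.eigenvalues x.2 := hω.eigenvalues_pos _
    generalize hν.1.eigenvalues x.1 = l at *
    generalize hω.1.eigenvalues x.2 = m at *
    have n1 := Complex.normSq_nonneg z1
    have n2 := Complex.normSq_nonneg z2
    have n3 : Complex.normSq (z1 + z2) ≤ 2 * (Complex.normSq z1 + Complex.normSq z2) := by
      simp only [Complex.normSq_apply, Complex.add_re, Complex.add_im]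
      nlinarith [sq_nonneg (z1.re - z2.re), sq_nonneg (z1.im - z2.im)]
    have k0 : 0 ≤ min l m := le_min hl.le hmm.le
    have k1 := mul_le_mul_of_nonneg_left (min_le_right l m) n1
    have k2 := mul_le_mul_of_nonneg_left (min_le_left l m) n2
    have k3 := mul_le_mul_of_nonneg_right n3 k0
    linarith

end MatrixPart

section AnalysisPart

open Real

/-- pointwise inequality -/
lemma pointwise_bound {l m : ℝ} (hl : 0 < l) (hm : 0 < m) {w s v δ t K : ℝ} (hw : 0 < w)
    (hs0 : 0 ≤ s) (hs1 : s ≤ 1) (hδ : 0 ≤ δ) (ht : 0 < t)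
    (hK1 : s * v + δ ≤ K) (hK2 : -(1 - s) * v + δ ≤ K) :
    exp (-(w * K)) * (l ^ s * m ^ (1 - s)
      - exp (-(t * w * (v + δ))) * (l ^ (s + t) * m ^ (1 - (s + t)))
      - exp (t * w * (v - δ)) * (l ^ (s - t) * m ^ (1 - (s - t)))) ≤ min l m := by
  obtain ⟨a, rfl⟩ : ∃ a, l = exp a := ⟨log l, (exp_log hl).symm⟩
  obtain ⟨b, rfl⟩ : ∃ b, m = exp b := ⟨log m, (exp_log hm).symm⟩
  simp only [← exp_mul, ← exp_add]
  rw [mul_sub, mul_sub]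
  simp only [← exp_add]
  by_cases h1 : a - b ≤ w * (v + δ)
  · by_cases h2 : w * (v - δ) ≤ a - b
    · have p1 := exp_pos (-(w * K) + (-(t * w * (v + δ)) + (a * (s + t) + b * (1 - (s + t)))))
      have p2 := exp_pos (-(w * K) + (t * w * (v - δ) + (a * (s - t) + b * (1 - (s - t)))))
      have p3 : exp (-(w * K) + (a * s + b * (1 - s))) ≤ min (exp a) (exp b) := by
        refine le_min (exp_le_exp.2 ?_) (exp_le_exp.2 ?_)
        · have := mul_le_mul_of_nonneg_left h2 (sub_nonneg.2 hs1)
          have := mul_le_mul_of_nonneg_left hK2 hw.le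
          have := mul_nonneg (mul_nonneg hw.le hδ) hs0
          nlinarith
        · have := mul_le_mul_of_nonneg_left h1 hs0
          have := mul_le_mul_of_nonneg_left hK1 hw.le
          have := mul_nonneg (mul_nonneg hw.le hδ) (sub_nonneg.2 hs1)
          nlinarith
      linarith
    · have p1 := exp_pos (-(w * K) + (-(t * w * (v + δ)) + (a * (s + t) + b * (1 - (s + t)))))
      have p3 : exp (-(w * K) + (a * s + b * (1 - s))) ≤
          exp (-(w * K) + (t * w * (v - δ) + (a * (s - t) + b * (1 - (s - t))))) := by
        refine exp_le_exp.2 ?_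
        have := mul_le_mul_of_nonneg_left (not_le.1 h2).le ht.le
        nlinarith
      have : 0 ≤ min (exp a) (exp b) := le_min (exp_pos _).le (exp_pos _).le
      linarith
  · have p2 := exp_pos (-(w * K) + (t * w * (v - δ) + (a * (s - t) + b * (1 - (s - t)))))
    have p3 : exp (-(w * K) + (a * s + b * (1 - s))) ≤
        exp (-(w * K) + (-(t * w * (v + δ)) + (a * (s + t) + b * (1 - (s + t))))) := by
      refine exp_le_exp.2 ?_
      have := mul_le_mul_of_nonneg_left (not_le.1 h1).le ht.le
      nlinarith
    have : 0 ≤ min (exp a) (exp b) := le_min (exp_pos _).le (exp_pos _).le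
    linarith

/-- lower bound at an interior point -/
lemma lower_at (w : ℕ → ℝ) (hw : ∀ n, 0 < w n) (hwtop : Tendsto w atTop atTop)
    (Z : ℕ → ℝ → ℝ) (M : ℕ → ℝ) (e : ℝ → ℝ)
    (hZ : ∀ᶠ n in atTop, ∀ s, 0 < Z n s)
    (hlow : ∀ n (s v δ t K : ℝ), 0 ≤ s → s ≤ 1 → 0 ≤ δ → 0 < t → s * v + δ ≤ K →
      -(1 - s) * v + δ ≤ K →
      (1 / 2) * (exp (-(w n * K)) * (Z n s - exp (-(t * w n * (v + δ))) * Z n (s + t)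
        - exp (t * w n * (v - δ)) * Z n (s - t))) ≤ M n)
    (he : ∀ s ∈ Set.Icc (0 : ℝ) 1, Tendsto (fun n => log (Z n s) / w n) atTop (nhds (e s)))
    {s v : ℝ} (hs : s ∈ Set.Ioo (0:ℝ) 1) (hv : HasDerivAt e v s) {ε : ℝ} (hε : 0 < ε) :
    ∀ᶠ n in atTop, 0 < M n ∧ e s - max (s * v) (-(1 - s) * v) - ε ≤ log (M n) / w n := by
  -- choose δ, t
  set δ := ε / 3 with hδd
  have hδ : 0 < δ := by positivity
  have hd : ∀ᶠ y in nhds s, |e y - e s - (y - s) * v| ≤ δ / 2 * |y - s| := by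
    have := (hasDerivAt_iff_isLittleO.1 hv).def (show 0 < δ / 2 by positivity)
    simpa [smul_eq_mul, Real.norm_eq_abs] using this
  obtain ⟨r, hr, hball⟩ := Metric.eventually_nhds_iff.1 hd
  obtain ⟨t, ht, htr, hts, hts1⟩ : ∃ t : ℝ, 0 < t ∧ t < r ∧ t < s ∧ t < 1 - s := by
    refine ⟨min r (min s (1 - s)) / 2, ?_, ?_, ?_, ?_⟩ <;>
    · have h1 : 0 < min r (min s (1 - s)) := lt_min hr (lt_min hs.1 (by linarith [hs.2]))
      have h2 := min_le_left r (min s (1 - s))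
      have h3 := (min_le_right r (min s (1 - s))).trans (min_le_left s (1 - s))
      have h4 := (min_le_right r (min s (1 - s))).trans (min_le_right s (1 - s))
      linarith
  have hp : e (s + t) ≤ e s + t * v + δ / 2 * t := by
    have := hball (y := s + t) (by simp [Real.dist_eq, abs_of_pos ht, htr])
    rw [add_sub_cancel_left, abs_of_pos ht] at this
    linarith [(abs_le.1 this).2]
  have hq : e (s - t) ≤ e s - t * v + δ / 2 * t := by
    have := hball (y := s - t) (by simp [Real.dist_eq, abs_of_pos ht, htr])
    rw [show s - t - s = -t by ring, abs_neg, abs_of_pos ht] at this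
    linarith [(abs_le.1 this).2]
  set η := min (t * δ / 8) (ε / 3) with hηd
  have hη : 0 < η := lt_min (by positivity) (by positivity)
  have hη1 : η ≤ t * δ / 8 := min_le_left _ _
  have hη2 : η ≤ ε / 3 := min_le_right _ _
  have E0 := (he s ⟨hs.1.le, hs.2.le⟩).eventually (lt_mem_nhds (show e s - η < e s by linarith))
  have E1 := (he (s + t) ⟨by linarith [hs.1], by linarith⟩).eventually
    (gt_mem_nhds (show e (s + t) < e (s + t) + η by linarith))
  have E2 := (he (s - t) ⟨by linarith [hs.1], by linarith [hs.2]⟩).eventually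
    (gt_mem_nhds (show e (s - t) < e (s - t) + η by linarith))
  have W1 := hwtop.eventually_ge_atTop (log 4 / (t * δ / 4))
  have W2 := hwtop.eventually_ge_atTop (log 4 / (ε / 3))
  filter_upwards [hZ, E0, E1, E2, W1, W2] with n hZn h0 h1 h2 w1 w2
  have hwn := hw n
  rw [lt_div_iff₀ hwn, lt_log_iff_exp_lt (hZn _)] at h0
  rw [div_lt_iff₀ hwn, log_lt_iff_lt_exp (hZn _)] at h1 h2
  rw [div_le_iff₀ (by positivity)] at w1 w2
  set K := max (s * v) (-(1 - s) * v) + δ with hK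
  have hl := hlow n s v δ t K hs.1.le hs.2.le hδ.le ht
    (by rw [hK]; linarith [le_max_left (s * v) (-(1 - s) * v)])
    (by rw [hK]; linarith [le_max_right (s * v) (-(1 - s) * v)])
  have e4 : exp (-log 4) = 1 / 4 := by rw [exp_neg, exp_log (by norm_num)]; norm_num
  have tail : ∀ x, x ≤ (e s - η) * w n - log 4 → exp x ≤ exp ((e s - η) * w n) / 4 := by
    intro x hx
    calc exp x ≤ exp ((e s - η) * w n - log 4) := exp_le_exp.2 hx
      _ = _ := by rw [sub_eq_add_neg, exp_add, e4]; ring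
  have t1 : exp (-(t * w n * (v + δ))) * Z n (s + t) ≤ exp ((e s - η) * w n) / 4 := by
    refine (mul_le_mul_of_nonneg_left h1.le (exp_pos _).le).trans ?_
    rw [← exp_add]
    apply tail
    have := mul_le_mul_of_nonneg_right hp hwn.le
    have := mul_le_mul_of_nonneg_right hη1 hwn.le
    nlinarith
  have t2 : exp (t * w n * (v - δ)) * Z n (s - t) ≤ exp ((e s - η) * w n) / 4 := by
    refine (mul_le_mul_of_nonneg_left h2.le (exp_pos _).le).trans ?_
    rw [← exp_add]
    apply tail
    have := mul_le_mul_of_nonneg_right hq hwn.le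
    have := mul_le_mul_of_nonneg_right hη1 hwn.le
    nlinarith
  have fin : exp (-(w n * K) + (e s - η) * w n - log 4) ≤ M n := by
    refine le_trans ?_ hl
    rw [sub_eq_add_neg, exp_add, exp_add, e4]
    have := mul_le_mul_of_nonneg_left (show exp ((e s - η) * w n) / 2 ≤
      Z n s - exp (-(t * w n * (v + δ))) * Z n (s + t)
        - exp (t * w n * (v - δ)) * Z n (s - t) by linarith) (exp_pos (-(w n * K))).le
    linarith
  have hMpos : 0 < M n := (exp_pos _).trans_le fin
  refine ⟨hMpos, ?_⟩
  rw [le_div_iff₀ hwn]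
  refine le_trans ?_ ((le_log_iff_exp_le hMpos).2 fin)
  have := mul_le_mul_of_nonneg_right hη2 hwn.le
  have hK' : max (s * v) (-(1 - s) * v) = K - δ := by rw [hK]; ring
  rw [hK']
  nlinarith

end AnalysisPart

/-- Chernoff bound: under assumption (AF1),
`lim (1/w_n) log D(ν_n, ω_n) = inf_{s∈[0,1]} e(s)`. -/
theorem chernoff_bound {d : ℕ → ℕ}
    (ν ω : ∀ n, Matrix (Fin (d n)) (Fin (d n)) ℂ)
    (hν : ∀ n, (ν n).PosDef) (hω : ∀ n, (ω n).PosDef)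
    (w : ℕ → ℝ) (hw : ∀ n, 0 < w n) (hwtop : Tendsto w atTop atTop)
    (e : ℝ → ℝ)
    (he : ∀ s ∈ Set.Icc (0 : ℝ) 1, Tendsto
      (fun n => Real.log (((mpow (ν n) s * mpow (ω n) (1 - s)).trace).re) / w n)
      atTop (nhds (e s)))
    (hecont : ContinuousOn e (Set.Icc (0 : ℝ) 1))
    (hediff : ∀ s ∈ Set.Ioo (0 : ℝ) 1, DifferentiableAt ℝ e s)
    (dp dm : ℝ)
    (hdp : HasDerivWithinAt e dp (Set.Ici (0 : ℝ)) 0)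
    (hdm : HasDerivWithinAt e dm (Set.Iic (1 : ℝ)) 1)
    (hgap : dp < dm) :
    Tendsto (fun n => Real.log (minErr (ν n) (ω n)) / w n) atTop
      (nhds (sInf (e '' Set.Icc (0 : ℝ) 1))) := by

  choose q l m hq hl hm hZ hM using fun n => exists_classical (hν n) (hω n)
  set Z : ℕ → ℝ → ℝ := fun n s => ∑ x, q n x * (l n x ^ s * m n x ^ (1 - s)) with hZdef
  have he' : ∀ s ∈ Set.Icc (0 : ℝ) 1,
      Tendsto (fun n => Real.log (Z n s) / w n) atTop (nhds (e s)) := by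
    intro s hs
    refine (he s hs).congr fun n => ?_
    rw [hZ n s]
  have hZpos : ∀ᶠ n in atTop, ∀ s, 0 < Z n s := by
    by_contra hcon
    have hfreq : ∃ᶠ n in atTop, ∀ s, Z n s = 0 := by
      refine (Filter.not_eventually.1 hcon).mono fun n hn => ?_
      push Not at hn
      obtain ⟨s, hs⟩ := hn
      have hq0 : ∀ x, q n x = 0 := by
        intro x
        by_contra hx
        have hx' : 0 < q n x := lt_of_le_of_ne (hq n x) (Ne.symm hx)
        have : 0 < Z n s := by
          refine Finset.sum_pos' (fun y _ => ?_) ⟨x, Finset.mem_univ _, ?_⟩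
          · have := hq n y
            have := hl n y
            have := hm n y
            positivity
          · have := hl n x
            have := hm n x
            positivity
        linarith
      intro s'
      simp [hZdef, hq0]
    have hez : ∀ s ∈ Set.Icc (0 : ℝ) 1, e s = 0 := by
      intro s hs
      by_contra hne
      obtain ⟨n, h1, h2⟩ := (hfreq.and_eventually
        ((he' s hs).eventually (isOpen_ne.mem_nhds hne))).exists
      exact h2 (by simp [h1 s])
    have hd0 : dp = 0 := by
      have h1 : HasDerivWithinAt e dp (Set.Icc 0 1) 0 := hdp.mono Set.Icc_subset_Ici_self
      have h2 : HasDerivWithinAt e 0 (Set.Icc 0 1) 0 :=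
        (hasDerivWithinAt_const (0:ℝ) (Set.Icc (0:ℝ) 1) (0:ℝ)).congr hez (hez 0 (by simp))
      exact (uniqueDiffOn_Icc (zero_lt_one' ℝ) 0 (by simp)).eq_deriv _ h1 h2
    have hd1 : dm = 0 := by
      have h1 : HasDerivWithinAt e dm (Set.Icc 0 1) 1 := hdm.mono Set.Icc_subset_Iic_self
      have h2 : HasDerivWithinAt e 0 (Set.Icc 0 1) 1 :=
        (hasDerivWithinAt_const (1:ℝ) (Set.Icc (0:ℝ) 1) (0:ℝ)).congr hez (hez 1 (by simp))
      exact (uniqueDiffOn_Icc (zero_lt_one' ℝ) 1 (by simp)).eq_deriv _ h1 h2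
    rw [hd0, hd1] at hgap
    exact lt_irrefl _ hgap
  have hlow : ∀ n (s v δ t K : ℝ), 0 ≤ s → s ≤ 1 → 0 ≤ δ → 0 < t → s * v + δ ≤ K →
      -(1 - s) * v + δ ≤ K →
      (1 / 2) * (Real.exp (-(w n * K)) * (Z n s - Real.exp (-(t * w n * (v + δ))) * Z n (s + t)
        - Real.exp (t * w n * (v - δ)) * Z n (s - t))) ≤ minErr (ν n) (ω n) := by
    intro n s v δ t K h1 h2 h3 h4 h5 h6
    refine le_trans ?_ (hM n)
    refine mul_le_mul_of_nonneg_left ?_ (by norm_num)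
    simp only [hZdef]
    rw [Finset.mul_sum, Finset.mul_sum, ← Finset.sum_sub_distrib, ← Finset.sum_sub_distrib,
      Finset.mul_sum]
    refine Finset.sum_le_sum fun x _ => ?_
    have := mul_le_mul_of_nonneg_left
      (pointwise_bound (hl n x) (hm n x) (hw n) h1 h2 h3 h4 h5 h6) (hq n x)
    refine le_trans (le_of_eq ?_) this
    ring
  have hLA := fun {s v : ℝ} (hs : s ∈ Set.Ioo (0:ℝ) 1) (hv : HasDerivAt e v s) {ε : ℝ}
    (hε : 0 < ε) => lower_at w hw hwtop Z (fun n => minErr (ν n) (ω n)) e hZpos hlow he' hs hv hε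
  obtain ⟨s₀, hs₀, hmin⟩ := isCompact_Icc.exists_isMinOn
    (Set.nonempty_Icc.2 (zero_le_one' ℝ)) hecont
  have hinf : sInf (e '' Set.Icc (0 : ℝ) 1) = e s₀ := by
    refine IsLeast.csInf_eq ⟨Set.mem_image_of_mem e hs₀, ?_⟩
    rintro _ ⟨s, hs, rfl⟩
    exact hmin hs
  rw [hinf]
  -- the key lower bound
  have hpt : ∀ ε > 0, ∃ s ∈ Set.Ioo (0:ℝ) 1, ∃ v, HasDerivAt e v s ∧
      e s₀ - ε ≤ e s - max (s * v) (-(1 - s) * v) := by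
    intro ε hε
    have hcs := Metric.continuousOn_iff.1 hecont s₀ hs₀ ε hε
    obtain ⟨r, hr, hball⟩ := hcs
    by_cases h0 : s₀ = 0
    · subst h0
      obtain ⟨y, hy0, hyr, hy1⟩ : ∃ y : ℝ, 0 < y ∧ y < r ∧ y < 1 := by
        refine ⟨min r 1 / 2, ?_, ?_, ?_⟩ <;>
        · have := lt_min hr one_pos
          have := min_le_left r 1
          have := min_le_right r 1
          linarith
      have hdist := hball y ⟨hy0.le, hy1.le⟩ (by rwa [Real.dist_eq, sub_zero, abs_of_pos hy0])
      obtain ⟨ξ, hξ, hξe⟩ := exists_deriv_eq_slope e hy0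
        (hecont.mono (Set.Icc_subset_Icc le_rfl hy1.le))
        (fun x hx => (hediff x ⟨hx.1, hx.2.trans hy1⟩).differentiableWithinAt)
      have hξ' : ξ ∈ Set.Ioo (0:ℝ) 1 := ⟨hξ.1, hξ.2.trans hy1⟩
      refine ⟨ξ, hξ', deriv e ξ, (hediff ξ hξ').hasDerivAt, ?_⟩
      have m1 : e 0 ≤ e y := hmin ⟨hy0.le, hy1.le⟩
      have m2 : e 0 ≤ e ξ := hmin ⟨hξ'.1.le, hξ'.2.le⟩
      rw [sub_zero, eq_div_iff hy0.ne'] at hξe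
      have hv0 : 0 ≤ deriv e ξ := by
        by_contra hneg
        nlinarith [not_le.1 hneg]
      rw [Real.dist_eq] at hdist
      have := (abs_lt.1 hdist).2
      have hmax : max (ξ * deriv e ξ) (-(1 - ξ) * deriv e ξ) ≤ ε := by
        refine max_le ?_ ?_
        · nlinarith [hξ.2]
        · nlinarith [hξ'.2]
      linarith
    by_cases h1 : s₀ = 1
    · subst h1
      obtain ⟨y, hy0, hyr, hy1⟩ : ∃ y : ℝ, 0 < y ∧ 1 - y < r ∧ y < 1 := by
        refine ⟨1 - min r 1 / 2, ?_, ?_, ?_⟩ <;>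
        · have := lt_min hr one_pos
          have := min_le_left r 1
          have := min_le_right r 1
          linarith
      have hdist := hball y ⟨hy0.le, hy1.le⟩
        (by rwa [Real.dist_eq, abs_sub_comm, abs_of_pos (by linarith)])
      obtain ⟨ξ, hξ, hξe⟩ := exists_deriv_eq_slope e hy1
        (hecont.mono (Set.Icc_subset_Icc hy0.le le_rfl))
        (fun x hx => (hediff x ⟨hy0.trans hx.1, hx.2⟩).differentiableWithinAt)
      have hξ' : ξ ∈ Set.Ioo (0:ℝ) 1 := ⟨hy0.trans hξ.1, hξ.2⟩
      refine ⟨ξ, hξ', deriv e ξ, (hediff ξ hξ').hasDerivAt, ?_⟩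
      have m1 : e 1 ≤ e y := hmin ⟨hy0.le, hy1.le⟩
      have m2 : e 1 ≤ e ξ := hmin ⟨hξ'.1.le, hξ'.2.le⟩
      rw [eq_div_iff (by linarith)] at hξe
      have hv0 : deriv e ξ ≤ 0 := by
        by_contra hneg
        nlinarith [not_le.1 hneg]
      rw [Real.dist_eq] at hdist
      have := (abs_lt.1 hdist).2
      have hmax : max (ξ * deriv e ξ) (-(1 - ξ) * deriv e ξ) ≤ ε := by
        refine max_le ?_ ?_
        · nlinarith [hξ'.1]
        · nlinarith [hξ.1]
      linarith
    · have hs' : s₀ ∈ Set.Ioo (0:ℝ) 1 :=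
        ⟨lt_of_le_of_ne hs₀.1 (Ne.symm h0), lt_of_le_of_ne hs₀.2 h1⟩
      have hd := (hediff s₀ hs').hasDerivAt
      have hz : deriv e s₀ = 0 :=
        (hmin.isLocalMin (Icc_mem_nhds hs'.1 hs'.2)).deriv_eq_zero
      rw [hz] at hd
      exact ⟨s₀, hs', 0, hd, by simp [hε.le]⟩
  rw [Metric.tendsto_nhds]
  intro ε hε
  obtain ⟨s, hs, v, hv, hsv⟩ := hpt (ε / 3) (by positivity)
  have hL := hLA hs hv (show 0 < ε / 3 by positivity)
  have hU := (he s₀ hs₀).eventually (gt_mem_nhds (show e s₀ < e s₀ + ε / 2 by linarith))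
  filter_upwards [hL, hU] with n h1 h2
  have h3 : Real.log (minErr (ν n) (ω n)) / w n
      ≤ Real.log (((mpow (ν n) s₀ * mpow (ω n) (1 - s₀)).trace).re) / w n :=
    div_le_div_of_nonneg_right
      (Real.log_le_log h1.1 (minErr_le (hν n) (hω n) hs₀)) (hw n).le
  rw [Real.dist_eq, abs_lt]
  constructor <;> linarith [h1.2]
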